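/- arXiv:1603.08393 — 5 statements merged into one kernel-verified Lean document; each statement's English description precedes it below -/
import Mathlib

section
/- There exists a constant C > 0 such that for all integers n and k with 3 ≤ k ≤ √n and every n-vertex radio network, the Oblivious k-Shot schedule, executed under the k-shot semantics, informs every vertex of the network within C·n²/k steps. -/
/-- Vertex `v`, first informed at step `T`, transmits at step `t` under the
`k`-shot semantics with schedule `𝒯`: we need `t > T`, `v ∈ 𝒯 t`, and `t` must be
among the first `k` steps after `T` at which `v` appears in a transmission set,
i.e. fewer than `k` steps `t'` with `T < t' < t` satisfy `v ∈ 𝒯 t'`. -/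
def transmitsAt {n : ℕ} (𝒯 : ℕ → Finset (Fin n)) (k : ℕ)
    (T t : ℕ) (v : Fin n) : Prop :=
  T < t ∧ v ∈ 𝒯 t ∧ ((Finset.Ioo T t).filter (fun t' => v ∈ 𝒯 t')).card < k

open Classical in
/-- `runState 𝒯 k adj s t v = some T` iff vertex `v` has been informed by the end of
step `t`, and was first informed at step `T`.  The source `s` is informed at step `0`;
an uninformed vertex `w` becomes informed at step `t+1` iff exactly one in-neighbor
of `w` transmits at step `t+1`. -/
noncomputable def runState {n : ℕ} (𝒯 : ℕ → Finset (Fin n)) (k : ℕ)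
    (adj : Fin n → Fin n → Prop) (s : Fin n) : ℕ → Fin n → Option ℕ
  | 0 => fun v => if v = s then some 0 else none
  | t + 1 => fun w =>
      match runState 𝒯 k adj s t w with
      | some T => some T
      | none =>
          if ∃! v : Fin n, adj v w ∧
              ∃ T, runState 𝒯 k adj s t v = some T ∧ transmitsAt 𝒯 k T (t + 1) v
          then some (t + 1) else none

/-- `adj` together with source `s` forms an `n`-vertex radio network:
every vertex is reachable from the source by a directed path. -/
def IsNetwork {n : ℕ} (adj : Fin n → Fin n → Prop) (s : Fin n) : Prop :=
  ∀ v : Fin n, Relation.ReflTransGen adj s v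

/-- The schedule `𝒯` completes broadcasting on the network `(adj, s)`. -/
def Completes {n : ℕ} (𝒯 : ℕ → Finset (Fin n)) (k : ℕ)
    (adj : Fin n → Fin n → Prop) (s : Fin n) : Prop :=
  ∀ v : Fin n, ∃ t : ℕ, (runState 𝒯 k adj s t v).isSome

/-- `𝒯` is a correct `k`-shot broadcasting schedule for `n`: it completes
broadcasting on every `n`-vertex radio network. -/
def CorrectSchedule (n k : ℕ) (𝒯 : ℕ → Finset (Fin n)) : Prop :=
  ∀ (adj : Fin n → Fin n → Prop) (s : Fin n), IsNetwork adj s → Completes 𝒯 k adj s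
/-- The ceiling of the square root of a natural number: the least `m` with `n ≤ m²`. -/
def ceilSqrt (n : ℕ) : ℕ :=
  if Nat.sqrt n * Nat.sqrt n = n then Nat.sqrt n else Nat.sqrt n + 1

/-- The smallest prime `p` with `p ≥ m`. -/
def smallestPrimeGE (m : ℕ) : ℕ := Nat.find (Nat.exists_infinite_primes m)

/-- `p` for the Oblivious k-Shot schedule: the smallest prime `≥ ⌈√n⌉`. -/
def obP (n : ℕ) : ℕ := smallestPrimeGE (ceilSqrt n)

/-- `K = ⌈p/(k−2)⌉` for the Oblivious k-Shot schedule (`k ≥ 3`). -/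
def obK (n k : ℕ) : ℕ := (obP n + (k - 3)) / (k - 2)

/-- The point of the plane `(ZMod p) × (ZMod p)` associated with label `i`. -/
def pointOf (p : ℕ) (i : ℕ) : ZMod p × ZMod p := ((i / p : ℕ), (i % p : ℕ))

/-- Membership in the line `L_{a,b}` of direction `a ∈ {0,…,p}` and offset `b ∈ ZMod p`:
`L_{p,b} = {(x,y) : x = b}` and `L_{a,b} = {(x,y) : y = a·x + b}` for `a < p`. -/
def lineMem (p a : ℕ) (b : ZMod p) (q : ZMod p × ZMod p) : Prop :=
  if a = p then q.1 = b else q.2 = (a : ZMod p) * q.1 + b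

open Classical in
/-- The Oblivious k-Shot schedule on labels `{0,…,n−1}`.  Steps `t = 1, 2, …` come
in consecutive blocks of `K+1` steps.  The first step of the `r`-th block
(`r = 0, 1, …`) is the `r`-th Line-Transmit step, with transmission set
`{i < n : point(i) ∈ L_{a,b}}` where `b = r mod p` and `a = ⌊r/p⌋ mod (p+1)`.
The remaining `K` steps of each block are Round-Robin steps; the `j`-th
Round-Robin step overall has transmission set `{j mod p²} ∩ {0,…,n−1}`. -/
noncomputable def obSched (n k : ℕ) : ℕ → Finset (Fin n) := fun t =>
  let p := obP n
  let K := obK n k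
  if t = 0 then ∅
  else
    let t' := t - 1
    let r := t' / (K + 1)
    let pos := t' % (K + 1)
    if pos = 0 then
      Finset.univ.filter
        (fun i : Fin n => lineMem p ((r / p) % (p + 1)) ((r % p : ℕ) : ZMod p) (pointOf p (i : ℕ)))
    else
      Finset.univ.filter (fun i : Fin n => (i : ℕ) = (r * K + (pos - 1)) % (p ^ 2))

/-!
A phase consists of the `p` blocks in which the Line-Transmit steps run through the parallel class
of lines of one direction, so every vertex has exactly one line slot per phase.  Among any `k - 2`
consecutive phases there is a Round-Robin step at which `v` is scheduled alone, and up to the first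
such step after being informed `v` meets at most `k - 1` line slots; hence it does not run out of
shots before transmitting alone.

Suppose `v` is informed at step `T` and its out-neighbour `w` is still uninformed `m` phases later.
Then `v` has not been alone yet, so `m < k - 2`, and its slots in the `m - 1` complete phases all
collided at `w`.  These slots belong to distinct directions, and two lines of distinct directions
through `v` meet only in `v`, so the colliding vertices are distinct: `w` has at least `m` informed
in-neighbours.

Consequently, if `A` is the set of vertices outside `B` with an edge into `B`, information passes
from `A` to `B` within `|A| + 1` phases.  Growing `B` from `{z}` backwards until it contains the
source, these delays sum to at most `2n` phases of `O(n / k)` steps each.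
-/

section Execution

variable {n k : ℕ} {𝒯 : ℕ → Finset (Fin n)} {adj : Fin n → Fin n → Prop} {s : Fin n}

lemma runState_eq_some_of_le {t t' T : ℕ} {v : Fin n} (htt' : t ≤ t')
    (hv : runState 𝒯 k adj s t v = some T) : runState 𝒯 k adj s t' v = some T := by
  induction t', htt' using Nat.le_induction with
  | base => exact hv
  | succ m _ ih => simp [runState, ih]

lemma isSome_runState_of_le {t t' : ℕ} {v : Fin n} (htt' : t ≤ t')
    (hv : (runState 𝒯 k adj s t v).isSome) : (runState 𝒯 k adj s t' v).isSome := by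
  obtain ⟨T, hT⟩ := Option.isSome_iff_exists.1 hv
  exact Option.isSome_iff_exists.2 ⟨T, runState_eq_some_of_le htt' hT⟩

lemma isSome_runState_source (t : ℕ) : (runState 𝒯 k adj s t s).isSome :=
  isSome_runState_of_le t.zero_le (by simp [runState])

lemma runState_eq_none_of_le {t t' : ℕ} {v : Fin n} (htt' : t ≤ t')
    (hv : runState 𝒯 k adj s t' v = none) : runState 𝒯 k adj s t v = none := by
  rw [← Option.not_isSome_iff_eq_none] at hv ⊢
  exact mt (isSome_runState_of_le htt') hv

lemma exists_runState_eq_some_self {t : ℕ} {v : Fin n}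
    (hv : (runState 𝒯 k adj s t v).isSome) : ∃ T ≤ t, runState 𝒯 k adj s T v = some T := by
  induction t with
  | zero =>
    by_cases hvs : v = s
    · exact ⟨0, le_rfl, by simp [runState, hvs]⟩
    · simp [runState, hvs] at hv
  | succ t ih =>
    cases hprev : runState 𝒯 k adj s t v with
    | some T =>
      obtain ⟨T, hTt, hT⟩ := ih (by simp [hprev])
      exact ⟨T, by omega, hT⟩
    | none =>
      refine ⟨t + 1, le_rfl, ?_⟩
      simp only [runState, hprev] at hv ⊢
      split_ifs at hv ⊢
      · rfl
      · simp at hv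

open Classical in
/-- The in-neighbours of `w` that are informed by the end of step `t`: the vertices that may
transmit to `w`, and hence collide at `w`. -/
noncomputable def contenders (𝒯 : ℕ → Finset (Fin n)) (k : ℕ) (adj : Fin n → Fin n → Prop)
    (s : Fin n) (t : ℕ) (w : Fin n) : Finset (Fin n) :=
  {u | adj u w ∧ (runState 𝒯 k adj s t u).isSome}

lemma mem_contenders {t : ℕ} {u w : Fin n} :
    u ∈ contenders 𝒯 k adj s t w ↔ adj u w ∧ (runState 𝒯 k adj s t u).isSome := by
  simp [contenders]

lemma contenders_subset_of_le {t t' : ℕ} (htt' : t ≤ t') (w : Fin n) :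
    contenders 𝒯 k adj s t w ⊆ contenders 𝒯 k adj s t' w := fun _ hu =>
  mem_contenders.2 ⟨(mem_contenders.1 hu).1, isSome_runState_of_le htt' (mem_contenders.1 hu).2⟩

lemma exists_collision {t T : ℕ} {v w : Fin n} (hv : runState 𝒯 k adj s T v = some T)
    (hvw : adj v w) (hvt : transmitsAt 𝒯 k T t v) (hw : runState 𝒯 k adj s t w = none) :
    ∃ u ∈ contenders 𝒯 k adj s t w, u ≠ v ∧ u ∈ 𝒯 t := by
  obtain ⟨t, rfl⟩ : ∃ m, t = m + 1 := Nat.exists_eq_succ_of_ne_zero (Nat.ne_zero_of_lt hvt.1)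
  by_contra! hcollision
  have hunique : ∃! u, adj u w ∧
      ∃ T, runState 𝒯 k adj s t u = some T ∧ transmitsAt 𝒯 k T (t + 1) u := by
    refine ⟨v, ⟨hvw, T, runState_eq_some_of_le (Nat.lt_succ_iff.1 hvt.1) hv, hvt⟩, ?_⟩
    rintro u ⟨huw, T', hu, hut⟩
    by_contra hne
    have hinformed := isSome_runState_of_le t.le_succ (Option.isSome_of_eq_some hu)
    exact hcollision u (mem_contenders.2 ⟨huw, hinformed⟩) hne hut.2.1
  simp [runState, runState_eq_none_of_le t.le_succ hw, hunique] at hw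

end Execution

section Broadcast

variable {n k P : ℕ} {𝒯 : ℕ → Finset (Fin n)} {adj : Fin n → Fin n → Prop} {s : Fin n}

/-- The time unit `P` bounds the delay caused by collisions: an edge out of an informed vertex can
stay blocked for `m` units of `P` steps only if its head has at least `m` contenders by then. -/
def DelayBounded (𝒯 : ℕ → Finset (Fin n)) (k : ℕ) (adj : Fin n → Fin n → Prop) (s : Fin n)
    (P : ℕ) : Prop :=
  ∀ ⦃v w : Fin n⦄ ⦃T m : ℕ⦄, runState 𝒯 k adj s T v = some T → adj v w →
    runState 𝒯 k adj s (T + m * P) w = none →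
      m ≤ (contenders 𝒯 k adj s (T + m * P) w).card

open Classical in
/-- The vertices outside `B` with an edge into `B`. -/
noncomputable def inBoundary (adj : Fin n → Fin n → Prop) (B : Finset (Fin n)) :
    Finset (Fin n) :=
  {v | v ∉ B ∧ ∃ w ∈ B, adj v w}

lemma mem_inBoundary {B : Finset (Fin n)} {v : Fin n} :
    v ∈ inBoundary adj B ↔ v ∉ B ∧ ∃ w ∈ B, adj v w := by
  simp [inBoundary]

lemma card_union_inBoundary (B : Finset (Fin n)) :
    (B ∪ inBoundary adj B).card = B.card + (inBoundary adj B).card :=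
  Finset.card_union_of_disjoint <|
    Finset.disjoint_right.2 fun _ hv => (mem_inBoundary.1 hv).1

lemma DelayBounded.exists_isSome_of_mem_inBoundary (hdelay : DelayBounded 𝒯 k adj s P)
    {B : Finset (Fin n)} {v : Fin n} {t : ℕ} (hvB : v ∈ inBoundary adj B)
    (hv : (runState 𝒯 k adj s t v).isSome) :
    ∃ w ∈ B, (runState 𝒯 k adj s (t + ((inBoundary adj B).card + 1) * P) w).isSome := by
  by_contra! hB
  obtain ⟨-, w, hwB, hvw⟩ := mem_inBoundary.1 hvB
  obtain ⟨T, hTt, hT⟩ := exists_runState_eq_some_self hv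
  set m := (inBoundary adj B).card + 1
  have hle : T + m * P ≤ t + m * P := by omega
  have hw : runState 𝒯 k adj s (T + m * P) w = none :=
    runState_eq_none_of_le hle (Option.not_isSome_iff_eq_none.1 (hB w hwB))
  have hsubset : contenders 𝒯 k adj s (T + m * P) w ⊆ inBoundary adj B := by
    intro u hu
    obtain ⟨huw, hu⟩ := mem_contenders.1 hu
    exact mem_inBoundary.2 ⟨fun huB => hB u huB (isSome_runState_of_le hle hu), w, hwB, huw⟩
  exact Nat.not_succ_le_self _ ((hdelay hT hvw hw).trans (Finset.card_le_card hsubset))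

/-- Once some vertex of `B` is informed, `z` is informed at most `2 |B|` time units `P` later. -/
def Funnels (𝒯 : ℕ → Finset (Fin n)) (k : ℕ) (adj : Fin n → Fin n → Prop) (s : Fin n) (P : ℕ)
    (B : Finset (Fin n)) (z : Fin n) : Prop :=
  ∀ v ∈ B, ∀ t, (runState 𝒯 k adj s t v).isSome →
    (runState 𝒯 k adj s (t + 2 * B.card * P) z).isSome

lemma funnels_singleton (z : Fin n) : Funnels 𝒯 k adj s P {z} z := by
  intro v hv t hvt
  rw [Finset.mem_singleton.1 hv] at hvt
  exact isSome_runState_of_le (Nat.le_add_right _ _) hvt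

lemma Funnels.union_inBoundary (hdelay : DelayBounded 𝒯 k adj s P) {B : Finset (Fin n)}
    {z : Fin n} (hB : Funnels 𝒯 k adj s P B z) :
    Funnels 𝒯 k adj s P (B ∪ inBoundary adj B) z := by
  intro v hv t hvt
  rw [card_union_inBoundary]
  rcases Finset.mem_union.1 hv with hvB | hvA
  · refine isSome_runState_of_le ?_ (hB v hvB t hvt)
    gcongr
    omega
  · obtain ⟨w, hwB, hw⟩ := hdelay.exists_isSome_of_mem_inBoundary hvA hvt
    have hApos : 1 ≤ (inBoundary adj B).card := Finset.card_pos.2 ⟨v, hvA⟩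
    refine isSome_runState_of_le ?_ (hB w hwB _ hw)
    rw [add_assoc, ← add_mul]
    gcongr
    omega

lemma DelayBounded.exists_funnels (hdelay : DelayBounded 𝒯 k adj s P) {v z : Fin n}
    (hvz : Relation.ReflTransGen adj v z) : ∃ B, v ∈ B ∧ Funnels 𝒯 k adj s P B z := by
  induction hvz using Relation.ReflTransGen.head_induction_on with
  | refl => exact ⟨{z}, Finset.mem_singleton_self z, funnels_singleton z⟩
  | @head a b hab _ ih =>
    obtain ⟨B, hbB, hB⟩ := ih
    refine ⟨B ∪ inBoundary adj B, ?_, hB.union_inBoundary hdelay⟩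
    by_cases haB : a ∈ B
    · exact Finset.mem_union_left _ haB
    · exact Finset.mem_union_right _ (mem_inBoundary.2 ⟨haB, b, hbB, hab⟩)

theorem DelayBounded.isSome_runState (hdelay : DelayBounded 𝒯 k adj s P) (hnet : IsNetwork adj s)
    (z : Fin n) : (runState 𝒯 k adj s (2 * n * P) z).isSome := by
  obtain ⟨B, hsB, hB⟩ := hdelay.exists_funnels (hnet z)
  refine isSome_runState_of_le ?_ (hB s hsB 0 (isSome_runState_source 0))
  rw [zero_add]
  gcongr
  exact card_finset_fin_le B

end Broadcast

/-- A schedule organised in phases of `P` steps, phase `h` consisting of the steps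
`h * P + 1, …, (h + 1) * P`.  In each phase every vertex `v` has one step `slot v h` that it shares
with other vertices; all its further steps are solo steps, whose transmission set is `{v}`.  Solo
steps recur within `k - 2` phases, and no other vertex shares two slots of `v` that are fewer
than `k` phases apart. -/
structure PhasedSchedule {n : ℕ} (𝒯 : ℕ → Finset (Fin n)) (k P : ℕ)
    (slot : Fin n → ℕ → ℕ) : Prop where
  lt_slot : ∀ v h, h * P < slot v h
  slot_le : ∀ v h, slot v h ≤ (h + 1) * P
  mem_slot : ∀ v h, v ∈ 𝒯 (slot v h)
  solo_or_slot : ∀ v t, v ∈ 𝒯 t → 𝒯 t = {v} ∨ ∃ h, slot v h = t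
  exists_solo : ∀ v T, ∃ t, T < t ∧ t ≤ T + (k - 2) * P ∧ 𝒯 t = {v}
  eq_of_mem_slot : ∀ u v h h', u ∈ 𝒯 (slot v h) → u ∈ 𝒯 (slot v h') →
    h < h' → h' < h + k → u = v

namespace PhasedSchedule

variable {n k P : ℕ} {𝒯 : ℕ → Finset (Fin n)} {slot : Fin n → ℕ → ℕ}

lemma phaseLength_pos (h𝒯 : PhasedSchedule 𝒯 k P slot) (v : Fin n) : 0 < P := by
  simpa using (h𝒯.lt_slot v 0).trans_le (h𝒯.slot_le v 0)

lemma exists_first_solo (h𝒯 : PhasedSchedule 𝒯 k P slot) (v : Fin n) (T : ℕ) :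
    ∃ t, T < t ∧ t ≤ T + (k - 2) * P ∧ 𝒯 t = {v} ∧ ∀ t' ∈ Finset.Ioo T t, 𝒯 t' ≠ {v} := by
  classical
  have hex := h𝒯.exists_solo v T
  obtain ⟨hT, hle, hsolo⟩ := Nat.find_spec hex
  refine ⟨Nat.find hex, hT, hle, hsolo, fun t' ht' hsolo' => ?_⟩
  obtain ⟨hTt', ht't⟩ := Finset.mem_Ioo.1 ht'
  exact Nat.find_min hex ht't ⟨hTt', by omega, hsolo'⟩

lemma transmitsAt_of_forall_not_solo (h𝒯 : PhasedSchedule 𝒯 k P slot) {v : Fin n} {T t : ℕ}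
    (hTt : T < t) (htT : t ≤ T + (k - 2) * P) (hvt : v ∈ 𝒯 t)
    (hsolo : ∀ t' ∈ Finset.Ioo T t, 𝒯 t' ≠ {v}) : transmitsAt 𝒯 k T t v := by
  have hP := h𝒯.phaseLength_pos v
  have hk : 0 < k - 2 := Nat.pos_of_ne_zero fun h => by rw [h] at htT; omega
  have hslots : (Finset.Ioo T t).filter (v ∈ 𝒯 ·) ⊆
      (Finset.Icc (T / P) (T / P + (k - 2))).image (slot v) := by
    intro t' ht'
    obtain ⟨ht', hvt'⟩ := Finset.mem_filter.1 ht'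
    obtain ⟨h, rfl⟩ := (h𝒯.solo_or_slot v t' hvt').resolve_left (hsolo t' ht')
    obtain ⟨hTs, hst⟩ := Finset.mem_Ioo.1 ht'
    have hlower : T / P < h + 1 := Nat.div_lt_of_lt_mul <| by
      rw [mul_comm]; exact hTs.trans_le (h𝒯.slot_le v h)
    have hupper : h ≤ T / P + (k - 2) := by
      rw [← Nat.add_mul_div_right _ _ hP, Nat.le_div_iff_mul_le hP]
      exact ((h𝒯.lt_slot v h).trans (hst.trans_le htT)).le
    exact Finset.mem_image_of_mem _ (Finset.mem_Icc.2 ⟨Nat.lt_succ_iff.1 hlower, hupper⟩)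
  refine ⟨hTt, hvt, ?_⟩
  calc ((Finset.Ioo T t).filter (v ∈ 𝒯 ·)).card
      ≤ (Finset.Icc (T / P) (T / P + (k - 2))).card :=
        (Finset.card_le_card hslots).trans Finset.card_image_le
    _ < k := by rw [Nat.card_Icc]; omega

lemma lt_slot_of_div_lt (h𝒯 : PhasedSchedule 𝒯 k P slot) {v : Fin n} {T h : ℕ}
    (hh : T / P < h) : T < slot v h :=
  ((Nat.div_lt_iff_lt_mul (h𝒯.phaseLength_pos v)).1 hh).trans (h𝒯.lt_slot v h)

lemma slot_le_of_lt_div_add (h𝒯 : PhasedSchedule 𝒯 k P slot) {v : Fin n} {T h m : ℕ}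
    (hh : h < T / P + m) : slot v h ≤ T + m * P :=
  calc slot v h ≤ (h + 1) * P := h𝒯.slot_le v h
    _ ≤ (T / P + m) * P := Nat.mul_le_mul_right P hh
    _ = T / P * P + m * P := add_mul _ _ _
    _ ≤ T + m * P := by gcongr; exact Nat.div_mul_le_self T P

lemma lt_first_solo_of_runState_eq_none (h𝒯 : PhasedSchedule 𝒯 k P slot)
    {adj : Fin n → Fin n → Prop} {s v w : Fin n} {T t t₀ : ℕ}
    (hv : runState 𝒯 k adj s T v = some T) (hvw : adj v w)
    (hw : runState 𝒯 k adj s t w = none) (hTt₀ : T < t₀) (ht₀T : t₀ ≤ T + (k - 2) * P)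
    (hsolo : 𝒯 t₀ = {v}) (hfirst : ∀ t' ∈ Finset.Ioo T t₀, 𝒯 t' ≠ {v}) : t < t₀ := by
  by_contra! ht₀
  have hvt₀ := h𝒯.transmitsAt_of_forall_not_solo hTt₀ ht₀T (by simp [hsolo]) hfirst
  obtain ⟨u, -, huv, hu⟩ := exists_collision hv hvw hvt₀ (runState_eq_none_of_le ht₀ hw)
  exact huv (by simpa [hsolo] using hu)

lemma injOn_of_mem_slot (h𝒯 : PhasedSchedule 𝒯 k P slot) {v : Fin n} {I : Set ℕ} {u : ℕ → Fin n}
    (hI : ∀ h ∈ I, ∀ h' ∈ I, h' < h + k) (huv : ∀ h ∈ I, u h ≠ v)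
    (hu : ∀ h ∈ I, u h ∈ 𝒯 (slot v h)) : Set.InjOn u I := by
  have hlt : ∀ h ∈ I, ∀ h' ∈ I, h < h' → u h ≠ u h' := fun h hh h' hh' hlt heq =>
    huv h hh <| h𝒯.eq_of_mem_slot _ v h h' (hu h hh) (heq ▸ hu h' hh') hlt (hI h hh h' hh')
  intro h hh h' hh' heq
  by_contra hne
  rcases Nat.lt_or_gt_of_ne hne with hhh' | hh'h
  · exact hlt h hh h' hh' hhh' heq
  · exact hlt h' hh' h hh hh'h heq.symm

theorem delayBounded (h𝒯 : PhasedSchedule 𝒯 k P slot) (adj : Fin n → Fin n → Prop) (s : Fin n) :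
    DelayBounded 𝒯 k adj s P := by
  intro v w T m hv hvw hw
  obtain ⟨t₀, hTt₀, ht₀T, hsolo, hfirst⟩ := h𝒯.exists_first_solo v T
  have hlate : T + m * P < t₀ :=
    h𝒯.lt_first_solo_of_runState_eq_none hv hvw hw hTt₀ ht₀T hsolo hfirst
  have hmk : m < k - 2 := Nat.lt_of_mul_lt_mul_right (a := P) (by omega)
  set S := contenders 𝒯 k adj s (T + m * P) w
  set I := Finset.Ioo (T / P) (T / P + m) with hI
  have hcollide : ∀ h ∈ I, ∃ u ∈ S.erase v, u ∈ 𝒯 (slot v h) := by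
    intro h hh
    obtain ⟨hlower, hupper⟩ := Finset.mem_Ioo.1 hh
    have hsT := h𝒯.slot_le_of_lt_div_add (v := v) hupper
    have hvs := h𝒯.transmitsAt_of_forall_not_solo (h𝒯.lt_slot_of_div_lt hlower) (by omega)
      (h𝒯.mem_slot v h) fun t' ht' => hfirst t' (Finset.Ioo_subset_Ioo_right (by omega) ht')
    obtain ⟨u, hu, huv, hus⟩ := exists_collision hv hvw hvs (runState_eq_none_of_le hsT hw)
    exact ⟨u, Finset.mem_erase.2 ⟨huv, contenders_subset_of_le hsT w hu⟩, hus⟩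
  have : Nonempty (Fin n) := ⟨v⟩
  choose! u hu hus using hcollide
  have hclose : ∀ h ∈ I, ∀ h' ∈ I, h' < h + k := by
    simp only [hI, Finset.mem_Ioo]
    omega
  have hinj : Set.InjOn u (I : Set ℕ) :=
    h𝒯.injOn_of_mem_slot hclose (fun h hh => (Finset.mem_erase.1 (hu h hh)).1) hus
  have hcard : I.card ≤ (S.erase v).card := Finset.card_le_card_of_injOn u hu hinj
  have hvS : v ∈ S := mem_contenders.2
    ⟨hvw, Option.isSome_of_eq_some (runState_eq_some_of_le (Nat.le_add_right _ _) hv)⟩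
  have hcardS := Finset.card_erase_add_one hvS
  rw [Nat.card_Ioo] at hcard
  omega

end PhasedSchedule

section Plane

variable {p : ℕ}

/-- The offset `b` of the line `L_{a,b}` of direction `a` through the point `q`. -/
def lineOffset (p a : ℕ) (q : ZMod p × ZMod p) : ZMod p :=
  if a = p then q.1 else q.2 - a * q.1

lemma lineMem_iff_lineOffset_eq {a : ℕ} {b : ZMod p} {q : ZMod p × ZMod p} :
    lineMem p a b q ↔ lineOffset p a q = b := by
  unfold lineMem lineOffset
  split_ifs
  · rfl
  · rw [sub_eq_iff_eq_add']

lemma eq_of_lineOffset_eq [Fact p.Prime] {a a' : ℕ} (ha : a ≤ p) (ha' : a' ≤ p) (hne : a ≠ a')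
    {q q' : ZMod p × ZMod p} (h : lineOffset p a q = lineOffset p a q')
    (h' : lineOffset p a' q = lineOffset p a' q') : q = q' := by
  have hfst : q.1 = q'.1 := by
    unfold lineOffset at h h'
    split_ifs at h h' with hap ha'p ha'p
    · exact h
    · exact h
    · exact h'
    · have hslope : (a : ZMod p) ≠ a' := fun heq =>
        hne (CharP.natCast_injOn_Iio (ZMod p) p (ha.lt_of_ne hap) (ha'.lt_of_ne ha'p) heq)
      have hprod : ((a : ZMod p) - a') * (q.1 - q'.1) = 0 := by linear_combination h' - h
      exact sub_eq_zero.1 ((mul_eq_zero.1 hprod).resolve_left (sub_ne_zero.2 hslope))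
  have hsnd : q.2 = q'.2 := by
    unfold lineOffset at h h'
    split_ifs at h h'
    · omega
    · simpa [hfst] using h'
    · simpa [hfst] using h
    · simpa [hfst] using h
  exact Prod.ext hfst hsnd

lemma pointOf_injOn (p : ℕ) : (Set.Iio (p ^ 2)).InjOn (pointOf p) := by
  intro i hi j hj hij
  rw [Set.mem_Iio, sq] at hi hj
  have hp : 0 < p := Nat.pos_of_mul_pos_left (Nat.zero_lt_of_lt hi)
  have hcast := CharP.natCast_injOn_Iio (ZMod p) p
  obtain ⟨hdiv, hmod⟩ := Prod.mk.inj hij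
  rw [← Nat.div_add_mod i p, ← Nat.div_add_mod j p,
    hcast (Nat.div_lt_of_lt_mul hi) (Nat.div_lt_of_lt_mul hj) hdiv,
    hcast (Nat.mod_lt i hp) (Nat.mod_lt j hp) hmod]

end Plane

section Parameters

lemma obP_prime (n : ℕ) : (obP n).Prime := (Nat.find_spec (Nat.exists_infinite_primes _)).2

lemma ceilSqrt_le_obP (n : ℕ) : ceilSqrt n ≤ obP n :=
  (Nat.find_spec (Nat.exists_infinite_primes _)).1

lemma le_ceilSqrt_sq (n : ℕ) : n ≤ ceilSqrt n ^ 2 := by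
  unfold ceilSqrt
  split_ifs with hsq
  · rw [sq, hsq]
  · exact (Nat.lt_succ_sqrt' n).le

lemma le_obP_sq (n : ℕ) : n ≤ obP n ^ 2 :=
  (le_ceilSqrt_sq n).trans (Nat.pow_le_pow_left (ceilSqrt_le_obP n) 2)

lemma obP_sq_le {n : ℕ} (hn : 0 < n) : obP n ^ 2 ≤ 16 * n := by
  have hsqrt : 0 < n.sqrt := Nat.sqrt_pos.2 hn
  have hceil : ceilSqrt n ≠ 0 ∧ ceilSqrt n ≤ 2 * n.sqrt := by
    unfold ceilSqrt
    split_ifs <;> omega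
  obtain ⟨q, hq, hlt, hle⟩ := Nat.exists_prime_lt_and_le_two_mul _ hceil.1
  have hpq : obP n ≤ q := Nat.find_min' (Nat.exists_infinite_primes _) ⟨hlt.le, hq⟩
  calc obP n ^ 2 ≤ (4 * n.sqrt) ^ 2 := Nat.pow_le_pow_left (by omega) 2
    _ = 16 * n.sqrt ^ 2 := by ring
    _ ≤ 16 * n := Nat.mul_le_mul_left _ (Nat.sqrt_le' n)

lemma le_obP_of_sq_le {n k : ℕ} (hkn : k ^ 2 ≤ n) : k ≤ obP n :=
  (Nat.pow_le_pow_iff_left two_ne_zero).1 (hkn.trans (le_obP_sq n))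

lemma obK_eq_ceilDiv {n k : ℕ} (hk : 3 ≤ k) : obK n k = obP n ⌈/⌉ (k - 2) := by
  rw [Nat.ceilDiv_eq_add_pred_div, obK]
  congr 1
  omega

lemma obP_le_mul_obK {n k : ℕ} (hk : 3 ≤ k) : obP n ≤ (k - 2) * obK n k := by
  rw [obK_eq_ceilDiv hk]
  exact le_smul_ceilDiv (show 0 < k - 2 by omega)

lemma obK_le_obP {n k : ℕ} (hk : 3 ≤ k) : obK n k ≤ obP n := by
  rw [obK_eq_ceilDiv hk, ceilDiv_le_iff_le_smul (by omega), smul_eq_mul]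
  exact Nat.le_mul_of_pos_left _ (by omega)

lemma obK_pos {n k : ℕ} (hk : 3 ≤ k) : 0 < obK n k :=
  Nat.pos_of_mul_pos_left ((obP_prime n).pos.trans_le (obP_le_mul_obK hk))

/-- The length of a phase of the Oblivious k-Shot schedule, that is, of the `p` consecutive blocks
whose Line-Transmit steps have the same direction. -/
def phaseLength (n k : ℕ) : ℕ := obP n * (obK n k + 1)

lemma phaseLength_mul_le {n k : ℕ} (hk : 3 ≤ k) (hkn : k ^ 2 ≤ n) :
    phaseLength n k * k ≤ 80 * n := by
  have hblock : (obK n k + 1) * k ≤ 5 * obP n := by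
    have hceil : obK n k * (k - 2) ≤ obP n + (k - 3) := Nat.div_mul_le_self _ _
    have hK : obK n k ≤ obP n := obK_le_obP hk
    have hkp : k ≤ obP n := le_obP_of_sq_le hkn
    calc (obK n k + 1) * k = obK n k * (k - 2) + 2 * obK n k + k := by
          obtain ⟨j, rfl⟩ := Nat.exists_eq_add_of_le' (show 2 ≤ k by omega)
          rw [Nat.add_sub_cancel]
          ring
      _ ≤ 5 * obP n := by omega
  calc phaseLength n k * k = obP n * ((obK n k + 1) * k) := mul_assoc _ _ _
    _ ≤ obP n * (5 * obP n) := by gcongr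
    _ = 5 * obP n ^ 2 := by ring
    _ ≤ 80 * n := by linarith [obP_sq_le (n := n) (by nlinarith)]

end Parameters

section RoundRobin

lemma exists_lt_le_add_of_succ_le_add {f : ℕ → ℕ} {D : ℕ} (hf : StrictMono f) (hzero : f 0 ≤ D)
    (hsucc : ∀ i, f (i + 1) ≤ f i + D) (T : ℕ) : ∃ i, T < f i ∧ f i ≤ T + D := by
  have hex : ∃ i, T < f i := ⟨T + 1, hf.le_apply⟩
  refine ⟨Nat.find hex, Nat.find_spec hex, ?_⟩
  rcases hfind : Nat.find hex with _ | i
  · omega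
  · have hprev : f i ≤ T := not_lt.1 (Nat.find_min hex (hfind ▸ i.lt_succ_self))
    have := hsucc i
    omega

/-- The `j`-th Round-Robin step of a schedule with `K` Round-Robin steps per block: it is preceded
by `j` Round-Robin and `j / K + 1` Line-Transmit steps. -/
def roundRobinStep (K j : ℕ) : ℕ := j + j / K + 2

lemma roundRobinStep_strictMono (K : ℕ) : StrictMono (roundRobinStep K) := fun i j hij => by
  have := Nat.div_le_div_right (c := K) hij.le
  unfold roundRobinStep
  omega

lemma roundRobinStep_add_mul {K : ℕ} (hK : 0 < K) (j M : ℕ) :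
    roundRobinStep K (j + M * K) = roundRobinStep K j + M * (K + 1) := by
  rw [roundRobinStep, roundRobinStep, Nat.add_mul_div_right _ _ hK]
  ring

lemma roundRobinStep_le {K j M : ℕ} (hj : j < M * K) : roundRobinStep K j ≤ M * (K + 1) := by
  have hdiv : j / K < M := Nat.div_lt_of_lt_mul (by rwa [mul_comm])
  rw [roundRobinStep, mul_add, mul_one]
  omega

lemma roundRobinStep_sub_one (K j : ℕ) :
    roundRobinStep K j - 1 = j % K + 1 + (K + 1) * (j / K) := by
  change j + j / K + 1 = _
  linarith [Nat.div_add_mod j K]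

end RoundRobin

section Schedule

variable {n k : ℕ}

lemma mem_obSched_line {r : ℕ} {v : Fin n} :
    v ∈ obSched n k (r * (obK n k + 1) + 1) ↔
      lineOffset (obP n) (r / obP n % (obP n + 1)) (pointOf (obP n) v) = (r % obP n : ℕ) := by
  simp [obSched, lineMem_iff_lineOffset_eq]

lemma obSched_eq_singleton {t : ℕ} {v : Fin n} (ht : (t - 1) % (obK n k + 1) ≠ 0)
    (hv : v ∈ obSched n k t) : obSched n k t = {v} := by
  have ht0 : t ≠ 0 := by rintro rfl; simp at ht
  simp only [obSched, ht0, ht, if_false, Finset.mem_filter_univ] at hv ⊢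
  ext u
  rw [Finset.mem_filter_univ, Finset.mem_singleton, Fin.ext_iff, hv]

lemma obSched_roundRobinStep {j : ℕ} {v : Fin n} (hK : 0 < obK n k)
    (hv : (v : ℕ) = j % obP n ^ 2) : obSched n k (roundRobinStep (obK n k) j) = {v} := by
  have hlt : j % obK n k + 1 < obK n k + 1 := Nat.succ_lt_succ (Nat.mod_lt j hK)
  have hpos : (roundRobinStep (obK n k) j - 1) % (obK n k + 1) = j % obK n k + 1 := by
    rw [roundRobinStep_sub_one, Nat.add_mul_mod_self_left, Nat.mod_eq_of_lt hlt]
  have hblock : (roundRobinStep (obK n k) j - 1) / (obK n k + 1) = j / obK n k := by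
    rw [roundRobinStep_sub_one, Nat.add_mul_div_left _ _ (Nat.succ_pos _),
      Nat.div_eq_of_lt hlt, zero_add]
  refine obSched_eq_singleton (by omega) ?_
  have hne : roundRobinStep (obK n k) j ≠ 0 := Nat.succ_ne_zero _
  simp [obSched, hne, hpos, hblock, hv, Nat.div_add_mod']

lemma exists_obSched_eq_singleton (hk : 3 ≤ k) (v : Fin n) (T : ℕ) :
    ∃ t, T < t ∧ t ≤ T + (k - 2) * phaseLength n k ∧ obSched n k t = {v} := by
  have hK : 0 < obK n k := obK_pos hk
  have hv : (v : ℕ) < obP n ^ 2 := v.2.trans_le (le_obP_sq n)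
  set M := (k - 2) * obP n with hM
  have hperiod : obP n ^ 2 ≤ M * obK n k :=
    calc obP n ^ 2 = obP n * obP n := sq _
      _ ≤ (k - 2) * obK n k * obP n := Nat.mul_le_mul_right _ (obP_le_mul_obK hk)
      _ = M * obK n k := by ring
  obtain ⟨i, hTi, hiT⟩ := exists_lt_le_add_of_succ_le_add
    (f := fun i => roundRobinStep (obK n k) (v + obP n ^ 2 * i)) (D := M * (obK n k + 1))
    (fun i j hij => roundRobinStep_strictMono _ <|
      Nat.add_lt_add_left (Nat.mul_lt_mul_of_pos_left hij (Nat.zero_lt_of_lt hv)) _)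
    (roundRobinStep_le (by simpa using hv.trans_le hperiod))
    (fun i => by
      rw [← roundRobinStep_add_mul hK]
      exact (roundRobinStep_strictMono _).monotone (by rw [mul_add_one]; omega)) T
  refine ⟨_, hTi, hiT.trans_eq (by rw [hM, phaseLength, mul_assoc]), ?_⟩
  exact obSched_roundRobinStep hK (by rw [Nat.add_mul_mod_self_left, Nat.mod_eq_of_lt hv])

/-- The Line-Transmit step of vertex `v` in phase `h`: the lines of phase `h` have direction
`h mod (p + 1)` and are scheduled in the order of their offsets. -/
def lineSlot (n k : ℕ) (v : Fin n) (h : ℕ) : ℕ :=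
  (h * obP n + (lineOffset (obP n) (h % (obP n + 1)) (pointOf (obP n) v)).val) * (obK n k + 1) + 1

lemma lineOffset_val_lt (a : ℕ) (q : ZMod (obP n) × ZMod (obP n)) :
    (lineOffset (obP n) a q).val < obP n :=
  have : NeZero (obP n) := ⟨(obP_prime n).ne_zero⟩
  ZMod.val_lt _

lemma mem_obSched_lineSlot {u v : Fin n} {h : ℕ} :
    u ∈ obSched n k (lineSlot n k v h) ↔
      lineOffset (obP n) (h % (obP n + 1)) (pointOf (obP n) u) =
        lineOffset (obP n) (h % (obP n + 1)) (pointOf (obP n) v) := by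
  have : NeZero (obP n) := ⟨(obP_prime n).ne_zero⟩
  have hlt := lineOffset_val_lt (h % (obP n + 1)) (pointOf (obP n) v)
  rw [lineSlot, mem_obSched_line, add_comm (h * obP n), Nat.add_mul_div_right _ _ (obP_prime n).pos,
    Nat.div_eq_of_lt hlt, zero_add, Nat.add_mul_mod_self_right, Nat.mod_eq_of_lt hlt,
    ZMod.natCast_zmod_val]

lemma lt_lineSlot (v : Fin n) (h : ℕ) : h * phaseLength n k < lineSlot n k v h := by
  rw [lineSlot, phaseLength, ← mul_assoc, Nat.lt_succ_iff]
  gcongr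
  exact Nat.le_add_right _ _

lemma lineSlot_le (v : Fin n) (h : ℕ) : lineSlot n k v h ≤ (h + 1) * phaseLength n k := by
  set b := (lineOffset (obP n) (h % (obP n + 1)) (pointOf (obP n) v)).val with hb
  have hlt : b + 1 ≤ obP n := lineOffset_val_lt _ _
  calc lineSlot n k v h ≤ (h * obP n + (b + 1)) * (obK n k + 1) := by
        rw [lineSlot, ← hb, ← add_assoc, add_mul _ 1, one_mul]
        omega
    _ ≤ (h * obP n + obP n) * (obK n k + 1) := by gcongr
    _ = (h + 1) * phaseLength n k := by rw [phaseLength]; ring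

lemma obSched_eq_singleton_or_lineSlot {v : Fin n} {t : ℕ} (hv : v ∈ obSched n k t) :
    obSched n k t = {v} ∨ ∃ h, lineSlot n k v h = t := by
  by_cases hpos : (t - 1) % (obK n k + 1) = 0
  · right
    have ht : t ≠ 0 := by rintro rfl; simp [obSched] at hv
    obtain ⟨r, hr⟩ := Nat.dvd_of_mod_eq_zero hpos
    obtain rfl : t = r * (obK n k + 1) + 1 := by rw [mul_comm]; omega
    refine ⟨r / obP n, ?_⟩
    rw [lineSlot, mem_obSched_line.1 hv,
      ZMod.val_cast_of_lt (Nat.mod_lt r (obP_prime n).pos), Nat.div_add_mod']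
  · exact Or.inl (obSched_eq_singleton hpos hv)

lemma eq_of_mem_obSched_lineSlot {u v : Fin n} {h h' : ℕ} (hu : u ∈ obSched n k (lineSlot n k v h))
    (hu' : u ∈ obSched n k (lineSlot n k v h')) (hlt : h < h') (hclose : h' < h + (obP n + 1)) :
    u = v := by
  have : Fact (obP n).Prime := ⟨obP_prime n⟩
  have hdir : h % (obP n + 1) ≠ h' % (obP n + 1) := fun hmod => by
    have hdvd := (Nat.modEq_iff_dvd' hlt.le).1 hmod
    have := Nat.le_of_dvd (by omega) hdvd
    omega
  have hle (a : ℕ) : a % (obP n + 1) ≤ obP n := Nat.lt_succ_iff.1 (Nat.mod_lt a (Nat.succ_pos _))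
  have hpoint : pointOf (obP n) u = pointOf (obP n) v :=
    eq_of_lineOffset_eq (hle h) (hle h') hdir (mem_obSched_lineSlot.1 hu)
      (mem_obSched_lineSlot.1 hu')
  exact Fin.ext <| pointOf_injOn (obP n) (u.2.trans_le (le_obP_sq n))
    (v.2.trans_le (le_obP_sq n)) hpoint

theorem phasedSchedule_obSched (hk : 3 ≤ k) (hkn : k ^ 2 ≤ n) :
    PhasedSchedule (obSched n k) k (phaseLength n k) (lineSlot n k) where
  lt_slot := lt_lineSlot
  slot_le := lineSlot_le
  mem_slot _ _ := mem_obSched_lineSlot.2 rfl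
  solo_or_slot _ _ := obSched_eq_singleton_or_lineSlot
  exists_solo := exists_obSched_eq_singleton hk
  eq_of_mem_slot _ _ h h' hu hu' hlt hclose :=
    eq_of_mem_obSched_lineSlot hu hu' hlt <| by
      have := le_obP_of_sq_le hkn
      omega

end Schedule

/-- There is a constant `C > 0` such that for all `n`, `k` with
`3 ≤ k ≤ √n`, on every `n`-vertex radio network the Oblivious k-Shot schedule,
run under the `k`-shot semantics, informs every vertex within `C·n²/k` steps. -/
theorem oblivious_kshot_upper_bound :
    ∃ C : ℕ, 0 < C ∧
      ∀ (n k : ℕ), 3 ≤ k → k ^ 2 ≤ n →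
        ∀ (adj : Fin n → Fin n → Prop) (s : Fin n), IsNetwork adj s →
          ∀ v : Fin n, (runState (obSched n k) k adj s (C * n ^ 2 / k) v).isSome := by
  refine ⟨160, by norm_num, fun n k hk hkn adj s hnet v => ?_⟩
  have hdelay := (phasedSchedule_obSched hk hkn).delayBounded adj s
  refine isSome_runState_of_le ?_ (hdelay.isSome_runState hnet v)
  rw [Nat.le_div_iff_mul_le (by omega)]
  calc 2 * n * phaseLength n k * k = 2 * n * (phaseLength n k * k) := mul_assoc _ _ _
    _ ≤ 2 * n * (80 * n) := Nat.mul_le_mul_left _ (phaseLength_mul_le hk hkn)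
    _ = 160 * n ^ 2 := by ring
end

section
/- Every k-shot transmission tree over a finite set A of cardinality a ≥ 1 has height h satisfying (h+1)^k ≥ a; equivalently, the minimum height of a k-shot transmission tree over an a-element set is at least a^{1/k} − 1, i.e., Ω(a^{1/k}). -/
/-- `TransTree A h k` holds iff there is a `k`-shot transmission tree over the
(nonempty) label set `A` of height at most `h`: a finite binary tree whose nodes are
labeled by nonempty sets, with root labeled `A`, the labels of the children of each
internal node partitioning the label of that node, every leaf labeled by a singleton,
and at most `k` right-child edges on every root-to-leaf path.
* `leaf`: a leaf labeled `{x}` (any height bound, any budget);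
* `leftOnly`: a node whose only child is a left child (its label equals the parent's);
* `rightOnly`: a node whose only child is a right child (its label equals the
  parent's); this consumes one unit of the right-edge budget;
* `node`: a node with both a left and a right child, whose labels partition the
  parent's label; the right child consumes one unit of the right-edge budget. -/
inductive TransTree {α : Type*} [DecidableEq α] : Finset α → ℕ → ℕ → Prop
  | leaf (x : α) (h k : ℕ) : TransTree {x} h k
  | leftOnly {A : Finset α} {h k : ℕ} : TransTree A h k → TransTree A (h + 1) k
  | rightOnly {A : Finset α} {h k : ℕ} : TransTree A h k → TransTree A (h + 1) (k + 1)
  | node {L R : Finset α} {h k : ℕ} : Disjoint L R → L.Nonempty → R.Nonempty →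
      TransTree L h (k + 1) → TransTree R h k → TransTree (L ∪ R) (h + 1) (k + 1)

/-!
A tree of height `h` can carry at most `∑ i ≤ k, h.choose i` labels: a leaf is determined by the
set of levels at which its path turns right, and there are at most `k` of them. Inductively, the
two subtrees of a node contribute the two terms of Pascal's rule. Comparing this sum with the
binomial expansion of `(h + 1) ^ k` term by term gives the bound.
-/

theorem sum_range_succ_choose_succ (n k : ℕ) :
    ∑ i ∈ Finset.range (k + 1), (n + 1).choose i =
      ∑ i ∈ Finset.range (k + 1), n.choose i + ∑ i ∈ Finset.range k, n.choose i := by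
  simp only [Finset.sum_range_succ' _ k, Nat.choose_succ_succ', Finset.sum_add_distrib,
    Nat.choose_zero_right]
  ring

theorem sum_range_succ_choose_le_pow (n k : ℕ) :
    ∑ i ∈ Finset.range (k + 1), n.choose i ≤ (n + 1) ^ k := by
  have choose_le_term {i : ℕ} (hi : i ≤ k) : n.choose i ≤ n ^ i * k.choose i :=
    (Nat.choose_le_pow n i).trans (Nat.le_mul_of_pos_right _ (Nat.choose_pos hi))
  calc ∑ i ∈ Finset.range (k + 1), n.choose i
      ≤ ∑ i ∈ Finset.range (k + 1), n ^ i * k.choose i :=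
        Finset.sum_le_sum fun _ hi => choose_le_term (Finset.mem_range_succ_iff.mp hi)
    _ = (n + 1) ^ k := by simp only [add_pow, one_pow, mul_one, Nat.cast_id]

theorem TransTree.card_le_sum_range_choose {α : Type*} [DecidableEq α] {A : Finset α} {h k : ℕ}
    (ht : TransTree A h k) : A.card ≤ ∑ i ∈ Finset.range (k + 1), h.choose i := by
  induction ht with
  | leaf => simp [Finset.sum_range_succ']
  | leftOnly _ ih => exact ih.trans (Finset.sum_le_sum fun i _ => Nat.choose_le_succ _ i)
  | rightOnly _ ih =>
    rw [sum_range_succ_choose_succ]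
    exact ih.trans (Nat.le_add_left _ _)
  | node _ _ _ _ _ ihL ihR =>
    rw [sum_range_succ_choose_succ]
    exact (Finset.card_union_le _ _).trans (Nat.add_le_add ihL ihR)

/-- Every `k`-shot transmission tree over a finite set `A` with
`|A| = a ≥ 1` and height `h` satisfies `(h+1)^k ≥ a`; i.e. the minimum height of a
`k`-shot transmission tree over an `a`-element set is `Ω(a^{1/k})`. -/
theorem transTree_height_lower_bound {α : Type*} [DecidableEq α]
    (A : Finset α) (h k : ℕ) (hk : 1 ≤ k) (hA : A.Nonempty)
    (ht : TransTree A h k) : A.card ≤ (h + 1) ^ k :=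
  ht.card_le_sum_range_choose.trans (sum_range_succ_choose_le_pow h k)
end

section
/- Let 𝒯 be a correct k-shot broadcasting schedule for n. Let S be a sequence of distinct vertices whose first element is designated as the source, with |V(S)| + k < n, occurring in 𝒯, and let T = t(S,0) be the final step of its first occurrence. Then there exists a sequence R of at most k distinct vertices of V ∖ V(S) such that t(R,T) ≥ T + n − |V(S)| − k. -/
/-- The sequence `S` of vertices occurs in the schedule `𝒯` after step `T`:
there are steps `T < t₁ < t₂ < …` with the `i`-th element of `S` in `𝒯 tᵢ`. -/
def Occurs {n : ℕ} (𝒯 : ℕ → Finset (Fin n)) : List (Fin n) → ℕ → Prop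
  | [], _ => True
  | v :: rest, T => ∃ t : ℕ, T < t ∧ v ∈ 𝒯 t ∧ Occurs 𝒯 rest t

/-- The final step `t(S,T)` of the first occurrence of the sequence `S` after step
`T`: each step is taken minimal in turn (greedily). -/
noncomputable def occEnd {n : ℕ} (𝒯 : ℕ → Finset (Fin n)) : List (Fin n) → ℕ → ℕ
  | [], T => T
  | v :: rest, T => occEnd 𝒯 rest (sInf {t : ℕ | T < t ∧ v ∈ 𝒯 t})

/-- `tIdx 𝒯 v T i` is the step `t_i(v,T)`: the `i`-th step `t > T` with `v ∈ 𝒯 t`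
(and `T` itself for `i = 0`). -/
noncomputable def tIdx {n : ℕ} (𝒯 : ℕ → Finset (Fin n)) (v : Fin n) (T : ℕ) : ℕ → ℕ
  | 0 => T
  | i + 1 => sInf {t : ℕ | tIdx 𝒯 v T i < t ∧ v ∈ 𝒯 t}

/-- `shots 𝒯 k v T`: the number of steps `t > T` with `v ∈ 𝒯 t`, capped at `k`;
equivalently the largest `i ≤ k` such that `v` occurs `i` times after step `T`. -/
noncomputable def shots {n : ℕ} (𝒯 : ℕ → Finset (Fin n)) (k : ℕ) (v : Fin n) (T : ℕ) : ℕ :=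
  sSup {i : ℕ | i ≤ k ∧ Occurs 𝒯 (List.replicate i v) T}

/-- `t_{≤k}(v,T) = t_{shots(v,T)}(v,T)`. -/
noncomputable def tLeK {n : ℕ} (𝒯 : ℕ → Finset (Fin n)) (k : ℕ) (v : Fin n) (T : ℕ) : ℕ :=
  tIdx 𝒯 v T (shots 𝒯 k v T)

/-!
Write `T = t(S,0)` and fix a vertex `x ∉ S`. For a nonempty set `A` of vertices outside `S` and
different from `x`, consider the network in which the source sends a path along `S`, the last vertex
of `S` feeds every vertex outside `S` except `x`, and the in-neighbors of `x` are exactly those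
in `A`. All of `A` is informed at step `T`, so correctness forces a step at which exactly one
vertex of `A` transmits. Since this holds for every nonempty subset of `A`, peeling off isolated
vertices one at a time yields `|A|` different steps.

Choose `R` greedily: append the vertex whose next transmission comes last. A vertex outside `S` and
`R` that is still scheduled after `t(R,T)` has then been scheduled at least once during each of the
`k` rounds, so it has no shots left. Hence, when `A` avoids `R`, all isolating steps lie
between `T` and `t(R,T)`. Let `A` omit a set of exactly `k` of the `n - |S|` outside vertices that
contains `R`; choosing `x` in the omitted set costs no further vertex, so `|A| = n - |S| - k`.
-/

theorem card_le_card_of_forall_subset_existsUnique {α β : Type*} {P : α → β → Prop}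
    {A : Finset α} {I : Finset β}
    (h : ∀ B ⊆ A, B.Nonempty → ∃ t ∈ I, ∃! a, a ∈ B ∧ P a t) : A.card ≤ I.card := by
  classical
  induction A using Finset.strongInduction generalizing I with
  | H A ih =>
    rcases A.eq_empty_or_nonempty with rfl | hA
    · simp
    obtain ⟨t, ht, a, ⟨ha, -⟩, huniq⟩ := h A subset_rfl hA
    suffices (A.erase a).card ≤ (I.erase t).card by
      rw [Finset.card_erase_of_mem ha, Finset.card_erase_of_mem ht] at this
      have := Finset.card_pos.mpr ⟨t, ht⟩
      omega
    refine ih _ (Finset.erase_ssubset ha) fun B hB hBne => ?_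
    obtain ⟨t', ht', b, hb, hb_uniq⟩ := h B (hB.trans (A.erase_subset a)) hBne
    refine ⟨t', Finset.mem_erase.mpr ⟨?_, ht'⟩, b, hb, hb_uniq⟩
    rintro rfl
    have hbA := Finset.mem_erase.mp (hB hb.1)
    exact hbA.1 (huniq b ⟨hbA.2, hb.2⟩)

section Occurrences

variable {n : ℕ} {𝒯 : ℕ → Finset (Fin n)} {v : Fin n} {l l' : List (Fin n)} {T t : ℕ}

/-- The step `t(⟨v⟩, T)`: the first step after `T` whose transmission set contains `v`, with the
junk value `0` if there is none. -/
noncomputable def nextStep (𝒯 : ℕ → Finset (Fin n)) (v : Fin n) (T : ℕ) : ℕ :=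
  sInf {t : ℕ | T < t ∧ v ∈ 𝒯 t}

theorem nextStep_le (hT : T < t) (hv : v ∈ 𝒯 t) : nextStep 𝒯 v T ≤ t :=
  Nat.sInf_le ⟨hT, hv⟩

theorem lt_nextStep (h : ∃ t, T < t ∧ v ∈ 𝒯 t) : T < nextStep 𝒯 v T :=
  (Nat.sInf_mem h).1

theorem mem_nextStep (h : ∃ t, T < t ∧ v ∈ 𝒯 t) : v ∈ 𝒯 (nextStep 𝒯 v T) :=
  (Nat.sInf_mem h).2

theorem Occurs.anti {T' : ℕ} (h : Occurs 𝒯 l T) (hT : T' ≤ T) : Occurs 𝒯 l T' := by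
  cases l with
  | nil => trivial
  | cons v l =>
    obtain ⟨t, ht, hv, hl⟩ := h
    exact ⟨t, hT.trans_lt ht, hv, hl⟩

theorem occurs_cons_iff :
    Occurs 𝒯 (v :: l) T ↔ (∃ t, T < t ∧ v ∈ 𝒯 t) ∧ Occurs 𝒯 l (nextStep 𝒯 v T) := by
  constructor
  · rintro ⟨t, ht, hv, hl⟩
    exact ⟨⟨t, ht, hv⟩, hl.anti (nextStep_le ht hv)⟩
  · rintro ⟨h, hl⟩
    exact ⟨nextStep 𝒯 v T, lt_nextStep h, mem_nextStep h, hl⟩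

theorem occurs_singleton_iff : Occurs 𝒯 [v] T ↔ ∃ t, T < t ∧ v ∈ 𝒯 t := by
  simp only [Occurs, and_true]

theorem occurs_append_iff :
    Occurs 𝒯 (l ++ l') T ↔ Occurs 𝒯 l T ∧ Occurs 𝒯 l' (occEnd 𝒯 l T) := by
  induction l generalizing T with
  | nil => simp only [List.nil_append, Occurs, occEnd, true_and]
  | cons v l ih =>
    rw [List.cons_append, occurs_cons_iff, occurs_cons_iff, ih, and_assoc]
    rfl

theorem occEnd_concat (𝒯 : ℕ → Finset (Fin n)) (l : List (Fin n)) (v : Fin n) (T : ℕ) :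
    occEnd 𝒯 (l ++ [v]) T = nextStep 𝒯 v (occEnd 𝒯 l T) := by
  induction l generalizing T with
  | nil => rfl
  | cons _ _ ih => exact ih _

theorem Occurs.le_occEnd (h : Occurs 𝒯 l T) : T ≤ occEnd 𝒯 l T := by
  induction l generalizing T with
  | nil => rfl
  | cons v l ih =>
    rw [occurs_cons_iff] at h
    exact (lt_nextStep h.1).le.trans (ih h.2)

theorem Occurs.exists_getElem_mem {q : ℕ} (h : Occurs 𝒯 l T) (hq : q < l.length) :
    ∃ t, occEnd 𝒯 (l.take q) T < t ∧ l[q] ∈ 𝒯 t := by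
  rw [← List.take_append_drop q l, occurs_append_iff, List.drop_eq_getElem_cons hq,
    occurs_cons_iff] at h
  exact h.2.1

theorem occEnd_take_succ {q : ℕ} (hq : q < l.length) :
    occEnd 𝒯 (l.take (q + 1)) T = nextStep 𝒯 l[q] (occEnd 𝒯 (l.take q) T) := by
  rw [← List.take_concat_get' l q hq, occEnd_concat]

end Occurrences

section Appearances

variable {n k : ℕ} {𝒯 : ℕ → Finset (Fin n)} {v : Fin n} {T t E : ℕ}

/-- The number of steps in the half-open window `(T, E]` whose transmission set contains `v`. -/
def appearances (𝒯 : ℕ → Finset (Fin n)) (v : Fin n) (T E : ℕ) : ℕ :=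
  ((Finset.Ioc T E).filter (fun t => v ∈ 𝒯 t)).card

theorem appearances_lt_appearances {E' : ℕ} (hTE : T ≤ E) (hEt : E < t) (htE' : t ≤ E')
    (hv : v ∈ 𝒯 t) : appearances 𝒯 v T E < appearances 𝒯 v T E' := by
  refine Finset.card_lt_card <| (Finset.ssubset_iff_of_subset ?_).mpr ⟨t, ?_, ?_⟩
  · exact Finset.filter_subset_filter _ (Finset.Ioc_subset_Ioc_right (hEt.le.trans htE'))
  · exact Finset.mem_filter.mpr ⟨Finset.mem_Ioc.mpr ⟨hTE.trans_lt hEt, htE'⟩, hv⟩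
  · simp [hEt]

theorem transmitsAt.appearances_lt (h : transmitsAt 𝒯 k T t v) (hEt : E < t) :
    appearances 𝒯 v T E < k := by
  refine (Finset.card_le_card (Finset.filter_subset_filter _ fun t' ht' => ?_)).trans_lt h.2.2
  rw [Finset.mem_Ioc] at ht'
  exact Finset.mem_Ioo.mpr ⟨ht'.1, ht'.2.trans_lt hEt⟩

theorem transmitsAt_nextStep (hk : 1 ≤ k) (h : ∃ t, T < t ∧ v ∈ 𝒯 t) :
    transmitsAt 𝒯 k T (nextStep 𝒯 v T) v := by
  refine ⟨lt_nextStep h, mem_nextStep h, ?_⟩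
  rw [Finset.filter_eq_empty_iff.mpr, Finset.card_empty]
  · exact hk
  · intro t ht hv
    rw [Finset.mem_Ioo] at ht
    exact (nextStep_le ht.1 hv).not_gt ht.2

end Appearances

section Greedy

variable {n j k : ℕ} {𝒯 : ℕ → Finset (Fin n)} {W : Finset (Fin n)} {T : ℕ} {R : List (Fin n)}

/-- The outcome of `j` rounds of the greedy choice in `W` after step `T`: a sequence `R` of at most
`j` distinct vertices of `W` such that any other vertex of `W` still scheduled after `t(R,T)` has
been scheduled at least `j` times between `T` and `t(R,T)`. -/
structure Saturates (𝒯 : ℕ → Finset (Fin n)) (W : Finset (Fin n)) (T j : ℕ)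
    (R : List (Fin n)) : Prop where
  nodup : R.Nodup
  length_le : R.length ≤ j
  mem_of_mem : ∀ v ∈ R, v ∈ W
  occurs : Occurs 𝒯 R T
  le_appearances : ∀ v ∈ W, v ∉ R → (∃ t, occEnd 𝒯 R T < t ∧ v ∈ 𝒯 t) →
    j ≤ appearances 𝒯 v T (occEnd 𝒯 R T)

theorem saturates_zero_nil (𝒯 : ℕ → Finset (Fin n)) (W : Finset (Fin n)) (T : ℕ) :
    Saturates 𝒯 W T 0 [] :=
  ⟨List.nodup_nil, le_rfl, by simp, trivial, fun _ _ _ _ => Nat.zero_le _⟩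

theorem Saturates.concat (hR : Saturates 𝒯 W T j R) {u : Fin n} (huW : u ∈ W) (huR : u ∉ R)
    (hu : ∃ t, occEnd 𝒯 R T < t ∧ u ∈ 𝒯 t)
    (hmax : ∀ v ∈ W, v ∉ R → (∃ t, occEnd 𝒯 R T < t ∧ v ∈ 𝒯 t) →
      nextStep 𝒯 v (occEnd 𝒯 R T) ≤ nextStep 𝒯 u (occEnd 𝒯 R T)) :
    Saturates 𝒯 W T (j + 1) (R ++ [u]) where
  nodup := List.nodup_append_comm.mp (List.nodup_cons.mpr ⟨huR, hR.nodup⟩)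
  length_le := by simpa using hR.length_le
  mem_of_mem := by simpa [or_imp, forall_and, huW] using hR.mem_of_mem
  occurs := occurs_append_iff.mpr ⟨hR.occurs, occurs_singleton_iff.mpr hu⟩
  le_appearances := by
    rw [occEnd_concat]
    rintro v hvW hv ⟨t, ht, hvt⟩
    have hvR : v ∉ R := fun h => hv (List.mem_append_left _ h)
    have hvE : ∃ t, occEnd 𝒯 R T < t ∧ v ∈ 𝒯 t := ⟨t, (lt_nextStep hu).trans ht, hvt⟩
    calc
      j + 1 ≤ appearances 𝒯 v T (occEnd 𝒯 R T) + 1 :=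
        Nat.succ_le_succ (hR.le_appearances v hvW hvR hvE)
      _ ≤ appearances 𝒯 v T (nextStep 𝒯 u (occEnd 𝒯 R T)) :=
        appearances_lt_appearances hR.occurs.le_occEnd (lt_nextStep hvE) (hmax v hvW hvR hvE)
          (mem_nextStep hvE)

theorem Saturates.exists_succ (hR : Saturates 𝒯 W T j R) :
    ∃ R', Saturates 𝒯 W T (j + 1) R' := by
  classical
  let C := W.filter fun v => v ∉ R ∧ ∃ t, occEnd 𝒯 R T < t ∧ v ∈ 𝒯 t
  have mem_C {v : Fin n} (hvW : v ∈ W) (hvR : v ∉ R)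
      (hvE : ∃ t, occEnd 𝒯 R T < t ∧ v ∈ 𝒯 t) : v ∈ C :=
    Finset.mem_filter.mpr ⟨hvW, hvR, hvE⟩
  rcases C.eq_empty_or_nonempty with hC | hC
  · exact ⟨R, { hR with
      length_le := hR.length_le.trans j.le_succ
      le_appearances := fun v hvW hvR hvE =>
        absurd (mem_C hvW hvR hvE) (hC ▸ Finset.notMem_empty v) }⟩
  · obtain ⟨u, huC, hmax⟩ := C.exists_max_image (nextStep 𝒯 · (occEnd 𝒯 R T)) hC
    obtain ⟨huW, huR, huE⟩ := Finset.mem_filter.mp huC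
    exact ⟨R ++ [u], hR.concat huW huR huE
      fun v hvW hvR hvE => hmax v (mem_C hvW hvR hvE)⟩

theorem exists_saturates (𝒯 : ℕ → Finset (Fin n)) (W : Finset (Fin n)) (T j : ℕ) :
    ∃ R, Saturates 𝒯 W T j R := by
  induction j with
  | zero => exact ⟨[], saturates_zero_nil 𝒯 W T⟩
  | succ j ih => exact ih.elim fun _ hR => hR.exists_succ

theorem Saturates.le_occEnd_of_transmitsAt (hR : Saturates 𝒯 W T k R) {v : Fin n} {t : ℕ}
    (hvW : v ∈ W) (hvR : v ∉ R) (h : transmitsAt 𝒯 k T t v) : t ≤ occEnd 𝒯 R T := by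
  by_contra! hlt
  exact (h.appearances_lt hlt).not_ge (hR.le_appearances v hvW hvR ⟨t, hlt, h.2.1⟩)

theorem Saturates.add_card_le_occEnd (hR : Saturates 𝒯 W T k R) {A : Finset (Fin n)}
    (hAW : A ⊆ W) (hAR : ∀ a ∈ A, a ∉ R)
    (h : ∀ B ⊆ A, B.Nonempty → ∃ t, ∃! a, a ∈ B ∧ transmitsAt 𝒯 k T t a) :
    T + A.card ≤ occEnd 𝒯 R T := by
  suffices A.card ≤ (Finset.Ioc T (occEnd 𝒯 R T)).card by
    rw [Nat.card_Ioc] at this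
    have := hR.occurs.le_occEnd
    omega
  refine card_le_card_of_forall_subset_existsUnique
    (P := fun a t => transmitsAt 𝒯 k T t a) fun B hBA hB => ?_
  obtain ⟨t, ht⟩ := h B hBA hB
  obtain ⟨a, haB, ha⟩ := ht.exists
  exact ⟨t, Finset.mem_Ioc.mpr
    ⟨ha.1, hR.le_occEnd_of_transmitsAt (hAW (hBA haB)) (hAR a (hBA haB)) ha⟩, ht⟩

end Greedy

section Execution

variable {n k : ℕ} {𝒯 : ℕ → Finset (Fin n)} {adj : Fin n → Fin n → Prop} {s u w : Fin n}
  {T t : ℕ}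

/-- Exactly one in-neighbor of `w` transmits at step `t + 1`. The index is shifted because the
informed vertices are read off the state after step `t`. -/
def Receives (𝒯 : ℕ → Finset (Fin n)) (k : ℕ) (adj : Fin n → Fin n → Prop) (s : Fin n)
    (t : ℕ) (w : Fin n) : Prop :=
  ∃! v : Fin n, adj v w ∧ ∃ T, runState 𝒯 k adj s t v = some T ∧ transmitsAt 𝒯 k T (t + 1) v

/-- The vertex `v` is first informed at step `T` in the execution on `(adj, s)`, stated through all
states of the execution. -/
def InformedAt (𝒯 : ℕ → Finset (Fin n)) (k : ℕ) (adj : Fin n → Fin n → Prop) (s : Fin n)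
    (v : Fin n) (T : ℕ) : Prop :=
  ∀ t, runState 𝒯 k adj s t v = if T ≤ t then some T else none

theorem runState_succ_of_eq_some (h : runState 𝒯 k adj s t w = some T) :
    runState 𝒯 k adj s (t + 1) w = some T := by
  simp only [runState, h]

open Classical in
theorem runState_succ_of_eq_none (h : runState 𝒯 k adj s t w = none) :
    runState 𝒯 k adj s (t + 1) w = if Receives 𝒯 k adj s t w then some (t + 1) else none := by
  simp only [runState, h, Receives]
  congr

theorem runState_eq_none (hw : w ≠ s) (h : ∀ t' < t, ¬Receives 𝒯 k adj s t' w) :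
    runState 𝒯 k adj s t w = none := by
  induction t with
  | zero => exact if_neg hw
  | succ t ih =>
    rw [runState_succ_of_eq_none (ih fun t' ht' => h t' (ht'.trans t.lt_succ_self)),
      if_neg (h t t.lt_succ_self)]

theorem informedAt_source (𝒯 : ℕ → Finset (Fin n)) (k : ℕ) (adj : Fin n → Fin n → Prop)
    (s : Fin n) : InformedAt 𝒯 k adj s s 0 := by
  intro t
  rw [if_pos t.zero_le]
  induction t with
  | zero => exact if_pos rfl
  | succ t ih => exact runState_succ_of_eq_some ih

theorem informedAt_succ_of_receives (hw : w ≠ s) (h : Receives 𝒯 k adj s t w)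
    (hlt : ∀ t' < t, ¬Receives 𝒯 k adj s t' w) : InformedAt 𝒯 k adj s w (t + 1) := by
  intro t'
  split_ifs with ht'
  · induction t', ht' using Nat.le_induction with
    | base => rw [runState_succ_of_eq_none (runState_eq_none hw hlt), if_pos h]
    | succ t' _ ih => exact runState_succ_of_eq_some ih
  · exact runState_eq_none hw fun t'' ht'' => hlt t'' (by omega)

theorem exists_receives (hw : w ≠ s) (h : (runState 𝒯 k adj s t w).isSome) :
    ∃ t, Receives 𝒯 k adj s t w := by
  by_contra! hnone
  simp [runState_eq_none hw fun t' _ => hnone t'] at h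

theorem receives_iff_of_informedAt (h : ∀ v, adj v w → InformedAt 𝒯 k adj s v T) :
    Receives 𝒯 k adj s t w ↔ ∃! v, adj v w ∧ transmitsAt 𝒯 k T (t + 1) v := by
  refine existsUnique_congr fun v => and_congr_right fun hv => ?_
  rw [h v hv t]
  constructor
  · rintro ⟨T', hT', htr⟩
    obtain ⟨-, rfl⟩ : T ≤ t ∧ T = T' := by simpa using hT'
    exact htr
  · intro htr
    exact ⟨T, if_pos (Nat.le_of_lt_succ htr.1), htr⟩

theorem InformedAt.of_unique_inNeighbor (hk : 1 ≤ k) (hw : w ≠ s)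
    (hadj : ∀ v, adj v w ↔ v = u) (hu : InformedAt 𝒯 k adj s u T)
    (hocc : ∃ t, T < t ∧ u ∈ 𝒯 t) : InformedAt 𝒯 k adj s w (nextStep 𝒯 u T) := by
  have receives_iff (t : ℕ) : Receives 𝒯 k adj s t w ↔ transmitsAt 𝒯 k T (t + 1) u := by
    rw [receives_iff_of_informedAt fun v hv => (hadj v).mp hv ▸ hu]
    simp only [hadj]
    exact ⟨fun ⟨_, ⟨rfl, htr⟩, _⟩ => htr, fun htr => ⟨u, ⟨rfl, htr⟩, fun _ hv => hv.1⟩⟩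
  have hfirst := transmitsAt_nextStep hk hocc
  obtain ⟨t, ht⟩ := Nat.exists_eq_add_one_of_ne_zero (Nat.ne_zero_of_lt (lt_nextStep hocc))
  rw [ht] at hfirst ⊢
  refine informedAt_succ_of_receives hw ((receives_iff t).mpr hfirst) fun t' ht' hrec => ?_
  obtain ⟨hT, hmem, -⟩ := (receives_iff t').mp hrec
  have := nextStep_le hT hmem
  omega

end Execution

section AdversarialNetwork

variable {n k : ℕ} {𝒯 : ℕ → Finset (Fin n)} {S : List (Fin n)} {A : Finset (Fin n)}
  {x w : Fin n}

/-- The adversarial network: a path along `S`, edges from the last vertex of `S` to all vertices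
other than `x` outside `S`, and edges from `A` to `x`. The first two kinds are covered by one
clause because `S.idxOf w = S.length` for `w ∉ S`. -/
def pathStarAdj (S : List (Fin n)) (A : Finset (Fin n)) (x u w : Fin n) : Prop :=
  (w = x ∧ u ∈ A) ∨ (w ≠ x ∧ u ∈ S ∧ S.idxOf u + 1 = S.idxOf w)

theorem pathStarAdj_target_iff {u : Fin n} : pathStarAdj S A x u x ↔ u ∈ A := by
  simp [pathStarAdj]

theorem pathStarAdj_iff_eq_getElem (hS : S.Nodup) (hw : w ≠ x) {q : ℕ} (hq : q < S.length)
    (hwq : S.idxOf w = q + 1) (u : Fin n) : pathStarAdj S A x u w ↔ u = S[q] := by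
  simp only [pathStarAdj, hw, false_and, false_or, ne_eq, not_false_eq_true, true_and, hwq,
    add_left_inj]
  constructor
  · rintro ⟨-, rfl⟩
    exact (List.getElem_idxOf hq).symm
  · rintro rfl
    exact ⟨List.getElem_mem hq, hS.idxOf_getElem q hq⟩

theorem pathStar_induction (hne : S ≠ []) (hS : S.Nodup) (hxS : x ∉ S) {P : Fin n → Prop}
    (head : P (S.head hne))
    (step : ∀ (q : ℕ) (hq : q < S.length) (w : Fin n), w ≠ x → S.idxOf w = q + 1 →
      P S[q] → P w) (hw : w ≠ x) : P w := by
  induction hi : S.idxOf w generalizing w with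
  | zero => exact (List.idxOf_eq_zero_iff_head_eq hne).mp hi ▸ head
  | succ q ih =>
    have hq : q < S.length := by
      have := List.idxOf_le_length (a := w) (l := S)
      omega
    exact step q hq w hw hi
      (ih (ne_of_mem_of_not_mem (List.getElem_mem hq) hxS) (hS.idxOf_getElem q hq))

theorem isNetwork_pathStarAdj (hne : S ≠ []) (hS : S.Nodup) (hA : A.Nonempty) (hxS : x ∉ S)
    (hxA : x ∉ A) : IsNetwork (pathStarAdj S A x) (S.head hne) := by
  have reachable {w : Fin n} (hw : w ≠ x) :
      Relation.ReflTransGen (pathStarAdj S A x) (S.head hne) w :=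
    pathStar_induction hne hS hxS .refl (fun q hq w hw hwq hreach =>
      hreach.tail ((pathStarAdj_iff_eq_getElem hS hw hq hwq _).mpr rfl)) hw
  intro w
  by_cases hw : w = x
  · obtain ⟨a, ha⟩ := hA
    exact (reachable (ne_of_mem_of_not_mem ha hxA)).tail (hw ▸ pathStarAdj_target_iff.mpr ha)
  · exact reachable hw

theorem pathStarAdj_informedAt (hk : 1 ≤ k) (hne : S ≠ []) (hS : S.Nodup) (hocc : Occurs 𝒯 S 0)
    (hxS : x ∉ S) (hw : w ≠ x) :
    InformedAt 𝒯 k (pathStarAdj S A x) (S.head hne) w (occEnd 𝒯 (S.take (S.idxOf w)) 0) := by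
  refine pathStar_induction hne hS hxS
    (P := fun w => InformedAt 𝒯 k _ _ w (occEnd 𝒯 (S.take (S.idxOf w)) 0)) ?_
    (fun q hq w hw hwq hinf => ?_) hw
  · rw [(List.idxOf_eq_zero_iff_head_eq hne).mpr rfl]
    exact informedAt_source _ _ _ _
  · rw [hS.idxOf_getElem q hq] at hinf
    have hw_source : w ≠ S.head hne := fun h => by
      rw [(List.idxOf_eq_zero_iff_head_eq hne).mpr h.symm] at hwq
      omega
    rw [hwq, occEnd_take_succ hq]
    exact hinf.of_unique_inNeighbor hk hw_source (pathStarAdj_iff_eq_getElem hS hw hq hwq)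
      (hocc.exists_getElem_mem hq)

theorem CorrectSchedule.exists_isolating_step (hcorr : CorrectSchedule n k 𝒯) (hk : 1 ≤ k)
    (hne : S ≠ []) (hS : S.Nodup) (hocc : Occurs 𝒯 S 0) (hA : A.Nonempty)
    (hAS : ∀ a ∈ A, a ∉ S) (hxS : x ∉ S) (hxA : x ∉ A) :
    ∃ t, ∃! a, a ∈ A ∧ transmitsAt 𝒯 k (occEnd 𝒯 S 0) t a := by
  have hx_source : x ≠ S.head hne := (ne_of_mem_of_not_mem (List.head_mem hne) hxS).symm
  have informed (v : Fin n) (hv : pathStarAdj S A x v x) :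
      InformedAt 𝒯 k (pathStarAdj S A x) (S.head hne) v (occEnd 𝒯 S 0) := by
    rw [pathStarAdj_target_iff] at hv
    simpa only [List.idxOf_eq_length (hAS v hv), List.take_length] using
      pathStarAdj_informedAt (A := A) hk hne hS hocc hxS (ne_of_mem_of_not_mem hv hxA)
  obtain ⟨_, hx⟩ := hcorr _ _ (isNetwork_pathStarAdj hne hS hA hxS hxA) x
  obtain ⟨t, ht⟩ := exists_receives hx_source hx
  rw [receives_iff_of_informedAt informed] at ht
  exact ⟨t + 1, by simpa only [pathStarAdj_target_iff] using ht⟩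

end AdversarialNetwork

/-- Let `𝒯` be a correct `k`-shot broadcasting schedule for `n`, `S`
a sequence of distinct vertices (its first element designated as the source) with
`|V(S)| + k < n`, occurring in `𝒯`, and `T = t(S,0)` the final step of its first
occurrence.  Then there is a sequence `R` of at most `k` distinct vertices of
`V ∖ V(S)` occurring after `T` with `t(R,T) ≥ T + n − |V(S)| − k`. -/
theorem sub_k (n k : ℕ) (hn : 2 ≤ n) (hk : 1 ≤ k)
    (𝒯 : ℕ → Finset (Fin n)) (hcorr : CorrectSchedule n k 𝒯)
    (S : List (Fin n)) (hSne : S ≠ []) (hSnd : S.Nodup) (hSocc : Occurs 𝒯 S 0)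
    (hlen : S.length + k < n) :
    ∃ R : List (Fin n), R.Nodup ∧ R.length ≤ k ∧ (∀ v ∈ R, v ∉ S) ∧
      Occurs 𝒯 R (occEnd 𝒯 S 0) ∧
      occEnd 𝒯 S 0 + n - S.length - k ≤ occEnd 𝒯 R (occEnd 𝒯 S 0) := by
  obtain ⟨R, hR⟩ := exists_saturates 𝒯 S.toFinsetᶜ (occEnd 𝒯 S 0) k
  have notMem_S {v : Fin n} (hv : v ∈ S.toFinsetᶜ) : v ∉ S := by simpa using hv
  refine ⟨R, hR.nodup, hR.length_le, fun v hv => notMem_S (hR.mem_of_mem v hv), hR.occurs, ?_⟩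
  have hcard : S.toFinsetᶜ.card = n - S.length := by
    rw [Finset.card_compl, Fintype.card_fin, List.toFinset_card_of_nodup hSnd]
  obtain ⟨Q, hRQ, hQS, hQk⟩ : ∃ Q, R.toFinset ⊆ Q ∧ Q ⊆ S.toFinsetᶜ ∧ Q.card = k :=
    Finset.exists_subsuperset_card_eq (fun v hv => hR.mem_of_mem v (List.mem_toFinset.mp hv))
      ((List.toFinset_card_le R).trans hR.length_le) (by omega)
  obtain ⟨x, hxQ⟩ : Q.Nonempty := Finset.card_pos.mp (by omega)
  have hbound : occEnd 𝒯 S 0 + (S.toFinsetᶜ \ Q).card ≤ occEnd 𝒯 R (occEnd 𝒯 S 0) :=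
    hR.add_card_le_occEnd Finset.sdiff_subset
      (fun a ha haR => (Finset.mem_sdiff.mp ha).2 (hRQ (List.mem_toFinset.mpr haR)))
      fun B hB hBne => hcorr.exists_isolating_step hk hSne hSnd hSocc hBne
        (fun a ha => notMem_S (Finset.mem_sdiff.mp (hB ha)).1) (notMem_S (hQS hxQ))
        fun hxB => (Finset.mem_sdiff.mp (hB hxB)).2 hxQ
  rw [Finset.card_sdiff_of_subset hQS, hcard, hQk] at hbound
  omega
end

section
/- Let G be a finite bipartite graph with parts A and B. If G contains no conflicting induced subgraph, then |B| ≥ |A|. -/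
/-!
A nonempty finite `S ⊆ A` together with its neighborhood would be conflicting unless some vertex of
`B` has exactly one neighbor `a` in `S`. Passing from `S` to `S \ {a}` removes that vertex from the
neighborhood, so by induction `S` has at least `|S|` neighbors. This is Hall's condition, and Hall's
marriage theorem yields a matching that saturates `A`.
-/

/-- The subgraph induced on `A' ∪ B'` is conflicting, for the bipartite graph with edge relation
`E`: the notion whose absence forces a matching. Both vertex sets are finite, although the ambient
graph need not be. -/
def IsConflicting {α β : Type*} (E : α → β → Prop) (A' : Finset α) (B' : Finset β) : Prop :=
  A'.Nonempty ∧
    (∀ a ∈ A', ∀ b : β, E a b → b ∈ B') ∧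
    (∀ b ∈ B', ∃ a₁ ∈ A', ∃ a₂ ∈ A', a₁ ≠ a₂ ∧ E a₁ b ∧ E a₂ b)

section

variable {α β : Type*}

theorem exists_existsUnique_adj_of_not_isConflicting {E : α → β → Prop} {S : Finset α}
    (hS : S.Nonempty) (hfin : ∀ a ∈ S, {b | E a b}.Finite)
    (hnc : ∀ B' : Finset β, ¬ IsConflicting E S B') :
    ∃ b, ∃! a, a ∈ S ∧ E a b := by
  by_contra no_unique
  have neighbors_finite : (⋃ a ∈ S, {b | E a b}).Finite := S.finite_toSet.biUnion hfin
  refine hnc neighbors_finite.toFinset ⟨hS, fun a ha b hab ↦ ?_, fun b hb ↦ ?_⟩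
  · simpa using ⟨a, ha, hab⟩
  · obtain ⟨a, ha, hab⟩ : ∃ a ∈ S, E a b := by simpa using hb
    by_contra no_pair
    refine no_unique ⟨b, a, ⟨ha, hab⟩, fun a' ⟨ha', hab'⟩ ↦ ?_⟩
    by_contra hne
    exact no_pair ⟨a', ha', a, ha, hne, hab', hab⟩

theorem card_biUnion_erase_lt_card_biUnion [DecidableEq α] [DecidableEq β] {t : α → Finset β}
    {S : Finset α} {a : α} {b : β} (ha : a ∈ S) (hb : b ∈ t a)
    (eq_of_mem : ∀ a' ∈ S, b ∈ t a' → a' = a) :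
    ((S.erase a).biUnion t).card < (S.biUnion t).card := by
  have b_mem : b ∈ S.biUnion t := Finset.mem_biUnion.2 ⟨a, ha, hb⟩
  have b_notMem : b ∉ (S.erase a).biUnion t := by
    intro hb'
    obtain ⟨a', ha', hba'⟩ := Finset.mem_biUnion.1 hb'
    exact Finset.ne_of_mem_erase ha' (eq_of_mem a' (Finset.mem_of_mem_erase ha') hba')
  have erase_subset : (S.erase a).biUnion t ⊆ S.biUnion t :=
    Finset.biUnion_subset_biUnion_of_subset_left t (S.erase_subset a)
  exact Finset.card_lt_card ((Finset.ssubset_iff_of_subset erase_subset).2 ⟨b, b_mem, b_notMem⟩)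

theorem card_le_card_biUnion_of_forall_exists_existsUnique [DecidableEq β] {t : α → Finset β}
    (S : Finset α) (h : ∀ T ⊆ S, T.Nonempty → ∃ b, ∃! a, a ∈ T ∧ b ∈ t a) :
    S.card ≤ (S.biUnion t).card := by
  classical
  induction S using Finset.strongInduction with
  | H S ih =>
    obtain rfl | hS := S.eq_empty_or_nonempty
    · simp
    · obtain ⟨b, a, ⟨ha, hb⟩, eq_of_mem⟩ := h S subset_rfl hS
      have card_erase_le : (S.erase a).card ≤ ((S.erase a).biUnion t).card :=
        ih _ (Finset.erase_ssubset ha) fun T hT ↦ h T (hT.trans (S.erase_subset a))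
      calc
        S.card = (S.erase a).card + 1 := (Finset.card_erase_add_one ha).symm
        _ ≤ ((S.erase a).biUnion t).card + 1 := by gcongr
        _ ≤ (S.biUnion t).card :=
          card_biUnion_erase_lt_card_biUnion ha hb fun a' ha' hba' ↦ eq_of_mem a' ⟨ha', hba'⟩

theorem no_conflicting_subgraph_card_le_general (E : α → β → Prop)
    (hfin : ∀ a, {b | E a b}.Finite)
    (hnc : ¬ ∃ (A' : Finset α) (B' : Finset β), IsConflicting E A' B') :
    ∃ f : α → β, Function.Injective f ∧ ∀ a, E a (f a) := by
  classical
  let neighbors (a : α) : Finset β := (hfin a).toFinset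
  have mem_neighbors (a : α) (b : β) : b ∈ neighbors a ↔ E a b := (hfin a).mem_toFinset
  have hall (S : Finset α) : S.card ≤ (S.biUnion neighbors).card := by
    refine card_le_card_biUnion_of_forall_exists_existsUnique S fun T _ hT ↦ ?_
    simp only [mem_neighbors]
    exact exists_existsUnique_adj_of_not_isConflicting hT (fun a _ ↦ hfin a)
      fun B' hB' ↦ hnc ⟨T, B', hB'⟩
  simpa only [mem_neighbors] using
    (Finset.all_card_le_biUnion_card_iff_exists_injective neighbors).1 hall

end

/-- Let `G` be a finite bipartite graph with parts `A` and `B`,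
given by the two finite types `α`, `β` and the edge relation `E`.  For `A' ⊆ A`,
`B' ⊆ B`, the induced subgraph on `A' ∪ B'` is *conflicting* if `A'` is nonempty,
every vertex of `A'` has all of its `G`-neighbors inside `B'`, and every vertex of
`B'` has at least two neighbors in `A'`.  If `G` contains no conflicting induced
subgraph, then `|B| ≥ |A|`. -/
theorem no_conflicting_subgraph_card_le {α β : Type*} [Fintype α] [Fintype β]
    (E : α → β → Prop)
    (hnc : ¬ ∃ (A' : Finset α) (B' : Finset β),
        A'.Nonempty ∧
        (∀ a ∈ A', ∀ b : β, E a b → b ∈ B') ∧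
        (∀ b ∈ B', ∃ a₁ ∈ A', ∃ a₂ ∈ A', a₁ ≠ a₂ ∧ E a₁ b ∧ E a₂ b)) :
    Fintype.card α ≤ Fintype.card β := by
  obtain ⟨f, f_injective, -⟩ :=
    no_conflicting_subgraph_card_le_general E (fun _ ↦ Set.toFinite _) hnc
  exact Fintype.card_le_of_injective f f_injective
end

section
/- Let h and k be natural numbers and let S be a finite set of Boolean strings (lists of Booleans) that is prefix-free (no string in S is a proper prefix of another), such that every string in S has length at most h and contains at most k occurrences of true. Then |S| ≤ ∑_{i=0}^{k} C(h, i), where C(h, i) denotes the binomial coefficient. -/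
/-!
Send a string to the set of positions at which it carries `true`. Two strings with the same set
agree wherever both are defined, so the shorter is a prefix of the longer; on a prefix-free set the
map is therefore injective. Its values are subsets of `{0, …, h - 1}` with at most `k` elements,
and there are `∑_{i ≤ k} C(h, i)` of those.
-/

open Finset

section Positions

variable {α : Type*} [DecidableEq α]

/-- The set of (zero-based) positions at which the letter `a` occurs in the word `l`. For the letter
`true` it encodes a Boolean string, up to trailing occurrences of `false`, as a finite set. -/
def positions (a : α) (l : List α) : Finset ℕ :=
  {i ∈ range l.length | l[i]? = some a}

theorem mem_positions {a : α} {l : List α} {i : ℕ} : i ∈ positions a l ↔ l[i]? = some a := by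
  simp only [positions, mem_filter, mem_range, and_iff_right_iff_imp]
  exact fun hi => (List.getElem?_eq_some_iff.mp hi).1

theorem positions_subset_range (a : α) (l : List α) : positions a l ⊆ range l.length :=
  filter_subset _ _

theorem card_positions (a : α) (l : List α) : #(positions a l) = l.count a := by
  simp only [positions, card_filter]
  induction l with
  | nil => rfl
  | cons b l ih =>
    simp only [List.length_cons, sum_range_succ', List.getElem?_cons_succ, ih,
      List.getElem?_cons_zero, Option.some_inj, List.count_cons, beq_iff_eq]

end Positions

theorem isPrefix_of_positions_true_eq {x y : List Bool} (hlen : x.length ≤ y.length)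
    (hpos : positions true x = positions true y) : x <+: y := by
  refine List.prefix_iff_getElem.mpr ⟨hlen, fun i hi => Bool.eq_iff_iff.mpr ?_⟩
  have hmem : i ∈ positions true x ↔ i ∈ positions true y := by rw [hpos]
  simpa only [mem_positions, List.getElem?_eq_getElem hi,
    List.getElem?_eq_getElem (hi.trans_le hlen), Option.some_inj] using hmem

theorem injOn_positions_true_of_isAntichain {S : Set (List Bool)}
    (hS : IsAntichain (· <+: ·) S) : S.InjOn (positions true) := by
  intro x hx y hy hpos
  rcases le_total x.length y.length with hxy | hyx
  · exact hS.eq hx hy (isPrefix_of_positions_true_eq hxy hpos)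
  · exact hS.eq' hx hy (isPrefix_of_positions_true_eq hyx hpos.symm)

theorem card_filter_powerset_card_le {β : Type*} (T : Finset β) (k : ℕ) :
    #{A ∈ T.powerset | #A ≤ k} = ∑ i ∈ range (k + 1), (#T).choose i := by
  have hfiber : ∀ i ∈ range (k + 1),
      {A ∈ {A ∈ T.powerset | #A ≤ k} | #A = i} = T.powersetCard i := by
    intro i hi
    rw [mem_range_succ_iff] at hi
    ext A
    simp only [mem_filter, mem_powerset, mem_powersetCard]
    exact ⟨fun hA => ⟨hA.1.1, hA.2⟩, fun hA => ⟨⟨hA.1, hA.2.trans_le hi⟩, hA.2⟩⟩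
  calc #{A ∈ T.powerset | #A ≤ k}
      = ∑ i ∈ range (k + 1), #{A ∈ {A ∈ T.powerset | #A ≤ k} | #A = i} :=
        card_eq_sum_card_fiberwise fun _ hA => mem_range_succ_iff.mpr (mem_filter.mp hA).2
    _ = ∑ i ∈ range (k + 1), (#T).choose i :=
        sum_congr rfl fun i hi => by rw [hfiber i hi, card_powersetCard]

theorem prefixFree_card_le_general (T : Finset ℕ) (k : ℕ) (S : Set (List Bool))
    (hpf : IsAntichain (· <+: ·) S) (hpos : ∀ x ∈ S, positions true x ⊆ T)
    (htrue : ∀ x ∈ S, x.count true ≤ k) :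
    S.encard ≤ (∑ i ∈ range (k + 1), (#T).choose i : ℕ) := by
  have hmaps : S.MapsTo (positions true) ({A ∈ T.powerset | #A ≤ k} : Finset (Finset ℕ)) :=
    fun x hx => mem_filter.mpr
      ⟨mem_powerset.mpr (hpos x hx), (card_positions true x).trans_le (htrue x hx)⟩
  rw [← card_filter_powerset_card_le, ← Set.encard_coe_eq_coe_finsetCard]
  exact Set.encard_le_encard_of_injOn hmaps (injOn_positions_true_of_isAntichain hpf)

/-- Let `S` be a finite prefix-free set of Boolean strings, each of
length at most `h` and containing at most `k` occurrences of `true`.  Then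
`|S| ≤ ∑_{i=0}^{k} C(h, i)`. -/
theorem prefixFree_card_le (h k : ℕ) (S : Finset (List Bool))
    (hpf : ∀ x ∈ S, ∀ y ∈ S, x ≠ y → ¬ x <+: y)
    (hlen : ∀ x ∈ S, x.length ≤ h)
    (htrue : ∀ x ∈ S, x.count true ≤ k) :
    S.card ≤ ∑ i ∈ Finset.range (k + 1), h.choose i := by
  have hpos : ∀ x ∈ S, positions true x ⊆ range h := fun x hx =>
    (positions_subset_range true x).trans (range_mono (hlen x hx))
  simpa only [Set.encard_coe_eq_coe_finsetCard, Nat.cast_le, card_range] using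
    prefixFree_card_le_general (range h) k S hpf hpos htrue
end
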